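/- Let H = (F, θ₀, θ₁, θ₂) be a connected combinatorial hypermap and let A ⊆ E(H), with A^c = E(H) ∖ A. Then the Euler genus of the partial dual satisfies ε(H^A) = ε(A) + ε(A^c) + 2·(c(H) − c(A) − c(A^c)) + 2·v(H). -/

import Mathlib

open Classical

/-- A pre-hypermap on a set of flags `F`: three structure maps `θ₀, θ₁, θ₂`.
It is a genuine combinatorial hypermap when the three maps are
fixed-point-free involutions (see `PreHypermap.IsHypermap`). -/
structure PreHypermap (F : Type*) where
  theta : Fin 3 → F → F

namespace PreHypermap

variable {F : Type*}

/-- `H` is a combinatorial hypermap: `θ₀, θ₁, θ₂` are fixed-point-free involutions. -/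
def IsHypermap (H : PreHypermap F) : Prop :=
  ∀ i : Fin 3, Function.Involutive (H.theta i) ∧ ∀ x : F, H.theta i x ≠ x

/-- The equivalence relation on `F` generated by a set of functions `F → F`;
for a set of involutions, two flags are related iff they are in the same orbit
of the subgroup generated by those involutions. -/
def orbitRel (fs : Set (F → F)) : F → F → Prop :=
  Relation.EqvGen (fun x y => ∃ f ∈ fs, f x = y)

/-- The setoid of orbits of the subgroup generated by a set of involutions. -/
def orbitSetoid (fs : Set (F → F)) : Setoid F :=
  Relation.EqvGen.setoid (fun x y => ∃ f ∈ fs, f x = y)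

/-- The number of orbits on `F` of the subgroup generated by a set of involutions. -/
noncomputable def orbitCount (fs : Set (F → F)) : ℕ :=
  Nat.card (Quotient (orbitSetoid fs))

/-- `v H`: the number of vertices, i.e. orbits of `⟨θ₁, θ₂⟩`. -/
noncomputable def v (H : PreHypermap F) : ℕ := orbitCount {H.theta 1, H.theta 2}

/-- `e H`: the number of hyperedges, i.e. orbits of `⟨θ₀, θ₂⟩`. -/
noncomputable def e (H : PreHypermap F) : ℕ := orbitCount {H.theta 0, H.theta 2}

/-- `f H`: the number of faces, i.e. orbits of `⟨θ₀, θ₁⟩`. -/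
noncomputable def f (H : PreHypermap F) : ℕ := orbitCount {H.theta 0, H.theta 1}

/-- `c H`: the number of components, i.e. orbits of `⟨θ₀, θ₁, θ₂⟩`. -/
noncomputable def c (H : PreHypermap F) : ℕ :=
  orbitCount {H.theta 0, H.theta 1, H.theta 2}

/-- `H` is connected if it has exactly one component. -/
def Connected (H : PreHypermap F) : Prop := H.c = 1

/-- The Euler characteristic `χ(H) = v + e + f - |F|/2`. -/
noncomputable def chi (H : PreHypermap F) : ℤ :=
  (H.v : ℤ) + (H.e : ℤ) + (H.f : ℤ) - (Nat.card F : ℤ) / 2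

/-- The Euler genus `ε(H) = 2 c(H) - χ(H)`. -/
noncomputable def eulerGenus (H : PreHypermap F) : ℤ := 2 * (H.c : ℤ) - H.chi

/-- `H` is orientable: there is `o : F → {+1, -1}` with `o (θᵢ x) = - o x` for all `i, x`. -/
def Orientable (H : PreHypermap F) : Prop :=
  ∃ o : F → ℤ, (∀ x : F, o x = 1 ∨ o x = -1) ∧
    ∀ (i : Fin 3) (x : F), o (H.theta i x) = - o x

/-- The set `E(H)` of hyperedges of `H`, each hyperedge being its set of flags
(an orbit of `⟨θ₀, θ₂⟩`). -/
def edges (H : PreHypermap F) : Set (Set F) :=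
  {s : Set F | ∃ x : F, s = {y : F | orbitRel {H.theta 0, H.theta 2} x y}}

/-- The geometric dual `H* = (F, θ₂, θ₁, θ₀)`. -/
def dual (H : PreHypermap F) : PreHypermap F where
  theta := fun i => H.theta (2 - i)

/-- The partial dual of `H` with respect to a set `S` of flags (interchange `θ₀` and
`θ₂` on `S`); for `A ⊆ E(H)` the partial dual `H^A` is `H.pdual (⋃₀ A)`. -/
noncomputable def pdual (H : PreHypermap F) (S : Set F) : PreHypermap F where
  theta := fun i x =>
    if i = 1 then H.theta 1 x
    else if x ∈ S then H.theta (2 - i) x else H.theta i x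

/-- `f(A)` for `A ⊆ E(H)`: the number of orbits of `⟨θ₁, θ₂^A⟩` (which equals `v(H^A)`). -/
noncomputable def subf (H : PreHypermap F) (A : Set (Set F)) : ℕ :=
  (H.pdual (⋃₀ A)).v

/-- `c(A)` for `A ⊆ E(H)`: the number of orbits of the subgroup generated by `θ₁`, `θ₂`
and the permutation equal to `θ₀` on `S(A)` and the identity elsewhere. -/
noncomputable def subc (H : PreHypermap F) (A : Set (Set F)) : ℕ :=
  orbitCount {H.theta 1, H.theta 2, fun x => if x ∈ ⋃₀ A then H.theta 0 x else x}

/-- `χ(A) = v(A) + e(A) + f(A) - |S(A)|/2` for `A ⊆ E(H)`, where `v(A) = v(H)`,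
`e(A) = |A|`, `f(A) = v(H^A)` and `S(A) = ⋃₀ A`. -/
noncomputable def subchi (H : PreHypermap F) (A : Set (Set F)) : ℤ :=
  (H.v : ℤ) + (A.ncard : ℤ) + (H.subf A : ℤ) - ((⋃₀ A).ncard : ℤ) / 2

/-- `ε(A) = 2 c(A) - χ(A)` for `A ⊆ E(H)`. -/
noncomputable def subeps (H : PreHypermap F) (A : Set (Set F)) : ℤ :=
  2 * (H.subc A : ℤ) - H.subchi A

/-- The hyperedge set of `H` as a finset. -/
noncomputable def edgeFinset (H : PreHypermap F) [Fintype F] : Finset (Set F) :=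
  (Set.toFinite H.edges).toFinset

/-- The partial-dual Euler-genus polynomial `∂ε_H(z) = Σ_{A ⊆ E(H)} z^(ε(H^A))`. -/
noncomputable def pdPoly (H : PreHypermap F) [Fintype F] : Polynomial ℕ :=
  ∑ A ∈ H.edgeFinset.powerset,
    Polynomial.X ^ ((H.pdual (⋃₀ (A : Set (Set F)))).eulerGenus).toNat

/-- The partial-dual orientable-genus polynomial `∂Γ_H(z) = Σ_{A ⊆ E(H)} z^(ε(H^A)/2)`. -/
noncomputable def pdGammaPoly (H : PreHypermap F) [Fintype F] : Polynomial ℕ :=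
  ∑ A ∈ H.edgeFinset.powerset,
    Polynomial.X ^ (((H.pdual (⋃₀ (A : Set (Set F)))).eulerGenus) / 2).toNat

/-- The join `H₁ ∨ H₂` of two hypermaps on disjoint flag sets, joining the corner
`{x, θ₁ x}` of `H₁` to the corner `{y, θ₁′ y}` of `H₂`. -/
noncomputable def join {F₁ F₂ : Type*} (H₁ : PreHypermap F₁) (H₂ : PreHypermap F₂)
    (x : F₁) (y : F₂) : PreHypermap (F₁ ⊕ F₂) where
  theta := fun i z =>
    if i = 1 then
      if z = Sum.inl x then Sum.inr y
      else if z = Sum.inr y then Sum.inl x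
      else if z = Sum.inl (H₁.theta 1 x) then Sum.inr (H₂.theta 1 y)
      else if z = Sum.inr (H₂.theta 1 y) then Sum.inl (H₁.theta 1 x)
      else Sum.map (H₁.theta 1) (H₂.theta 1) z
    else Sum.map (H₁.theta i) (H₂.theta i) z

/-- The bar-amalgamation `H₁ ⊕ H₂` of two hypermaps on disjoint flag sets, with a new
connecting hyperedge `{p, q, p', q'} = Fin 4` meeting the corner `{x, θ₁ x}` of `H₁`
and the corner `{y, θ₁′ y}` of `H₂`. -/
noncomputable def bar {F₁ F₂ : Type*} (H₁ : PreHypermap F₁) (H₂ : PreHypermap F₂)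
    (x : F₁) (y : F₂) : PreHypermap ((F₁ ⊕ F₂) ⊕ Fin 4) where
  theta := fun i z =>
    if i = 0 then
      match z with
      | .inl (.inl a) => .inl (.inl (H₁.theta 0 a))
      | .inl (.inr b) => .inl (.inr (H₂.theta 0 b))
      | .inr k => .inr (Equiv.swap (0 : Fin 4) 2 (Equiv.swap (1 : Fin 4) 3 k))
    else if i = 2 then
      match z with
      | .inl (.inl a) => .inl (.inl (H₁.theta 2 a))
      | .inl (.inr b) => .inl (.inr (H₂.theta 2 b))
      | .inr k => .inr (Equiv.swap (0 : Fin 4) 1 (Equiv.swap (2 : Fin 4) 3 k))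
    else
      if z = .inl (.inl x) then .inr 0
      else if z = .inr 0 then .inl (.inl x)
      else if z = .inl (.inl (H₁.theta 1 x)) then .inr 1
      else if z = .inr 1 then .inl (.inl (H₁.theta 1 x))
      else if z = .inl (.inr y) then .inr 2
      else if z = .inr 2 then .inl (.inr y)
      else if z = .inl (.inr (H₂.theta 1 y)) then .inr 3
      else if z = .inr 3 then .inl (.inr (H₂.theta 1 y))
      else
        match z with
        | .inl (.inl a) => .inl (.inl (H₁.theta 1 a))
        | .inl (.inr b) => .inl (.inr (H₂.theta 1 b))
        | .inr k => .inr k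

end PreHypermap

/-! The orbits of `⟨θ₀, θ₂⟩` and of `⟨θ₀, θ₁, θ₂⟩` do not see which of `θ₀, θ₂` is which, so
partial duality preserves `e` and `c`. The dual of `H^A` is `H^(A^c)`, so
`f(H^A) = v(H^(A^c)) = f(A^c)`, while `v(H^A) = f(A)`. Since the flags split as `S(A) ⊔ S(A^c)`,
comparing term by term gives `χ(A) + χ(A^c) = χ(H^A) + 2 v(H)`, which is the genus formula
expressed through `χ`. -/

theorem sUnion_sdiff_eq_compl_of_isPartition {α : Type*} {c A : Set (Set α)}
    (hc : Setoid.IsPartition c) (hA : A ⊆ c) : ⋃₀ (c \ A) = (⋃₀ A)ᶜ := by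
  have hdisj : (c ∪ A).PairwiseDisjoint id :=
    hc.pairwiseDisjoint.subset (Set.union_subset subset_rfl hA)
  simp_rw [Set.compl_eq_univ_sdiff, ← hc.sUnion_eq_univ, Set.sUnion_eq_biUnion]
  exact (Set.biUnion_sdiff_biUnion_eq hdisj).symm

theorem even_ncard_of_mapsTo_involutive {α : Type*} {g : α → α} {s : Set α}
    (hg : Function.Involutive g) (hfix : ∀ x ∈ s, g x ≠ x) (hs : Set.MapsTo g s s)
    (hfin : s.Finite) : Even s.ncard := by
  rw [Set.ncard_eq_toFinset_card s hfin, ← ZMod.natCast_eq_zero_iff_even, Finset.cast_card]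
  exact Finset.sum_involution (fun x _ => g x) (fun _ _ => by decide)
    (fun x hx _ => hfix x (hfin.mem_toFinset.1 hx))
    (fun x hx => hfin.mem_toFinset.2 (hs (hfin.mem_toFinset.1 hx))) (fun x _ => hg x)

namespace PreHypermap

section Orbits

variable {F : Type*} {fs gs : Set (F → F)}

theorem orbitCount_congr (h : ∀ x, Function.eval x '' fs = Function.eval x '' gs) :
    orbitCount fs = orbitCount gs := by
  have hrel : (fun x y => ∃ f ∈ fs, f x = y) = fun x y => ∃ f ∈ gs, f x = y :=
    funext fun x => h x
  unfold orbitCount orbitSetoid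
  rw [hrel]

theorem orbitCount_eq_ncard_classes (fs : Set (F → F)) :
    orbitCount fs = (orbitSetoid fs).classes.ncard :=
  Nat.card_congr (Setoid.quotientEquivClasses _)

theorem mapsTo_sUnion_of_subset_classes {f : F → F} (hf : f ∈ fs) {A : Set (Set F)}
    (hA : A ⊆ (orbitSetoid fs).classes) : Set.MapsTo f (⋃₀ A) (⋃₀ A) := by
  rintro x ⟨s, hs, hx⟩
  obtain ⟨y, rfl⟩ := hA hs
  have hstep : orbitSetoid fs x (f x) := .rel _ _ ⟨f, hf, rfl⟩
  exact ⟨_, hs, (orbitSetoid fs).trans ((orbitSetoid fs).symm hstep) hx⟩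

end Orbits

section PartialDual

variable {F : Type*} (H : PreHypermap F) (S : Set F)

theorem c_pdual : (H.pdual S).c = H.c := by
  refine orbitCount_congr fun x => ?_
  by_cases hx : x ∈ S
  · have hswap : ({H.theta 2 x, H.theta 1 x, H.theta 0 x} : Set F) =
        {H.theta 0 x, H.theta 1 x, H.theta 2 x} := by
      grind
    simpa [Set.image_insert_eq, pdual, hx] using hswap
  · simp [Set.image_insert_eq, pdual, hx]

theorem e_pdual : (H.pdual S).e = H.e := by
  refine orbitCount_congr fun x => ?_
  by_cases hx : x ∈ S
  · simpa [Set.image_pair, pdual, hx] using Set.pair_comm (H.theta 2 x) (H.theta 0 x)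
  · simp [Set.image_pair, pdual, hx]

theorem v_dual : H.dual.v = H.f :=
  congrArg orbitCount (Set.pair_comm (H.theta 1) (H.theta 0))

theorem dual_pdual : (H.pdual S).dual = H.pdual Sᶜ := by
  unfold dual pdual
  congr 1
  funext i x
  by_cases hx : x ∈ S <;> fin_cases i <;> simp [hx]

theorem f_pdual : (H.pdual S).f = (H.pdual Sᶜ).v := by
  rw [← dual_pdual, v_dual]

end PartialDual

section Edges

variable {F : Type*} {H : PreHypermap F} {A : Set (Set F)}

theorem edges_eq_classes (H : PreHypermap F) :
    H.edges = (orbitSetoid {H.theta 0, H.theta 2}).classes := by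
  have hsymm (x : F) : {y | orbitRel {H.theta 0, H.theta 2} x y} =
      {y | orbitSetoid {H.theta 0, H.theta 2} y x} :=
    Set.ext fun y => Setoid.comm' (orbitSetoid {H.theta 0, H.theta 2})
  simp only [edges, Setoid.classes, hsymm]

theorem isPartition_edges (H : PreHypermap F) : Setoid.IsPartition H.edges :=
  H.edges_eq_classes ▸ Setoid.isPartition_classes _

theorem ncard_edges (H : PreHypermap F) : H.edges.ncard = H.e := by
  rw [edges_eq_classes, ← orbitCount_eq_ncard_classes, e]

theorem sUnion_edges_sdiff (hA : A ⊆ H.edges) : ⋃₀ (H.edges \ A) = (⋃₀ A)ᶜ :=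
  sUnion_sdiff_eq_compl_of_isPartition H.isPartition_edges hA

variable [Finite F]

theorem IsHypermap.even_ncard_sUnion (hH : H.IsHypermap) (hA : A ⊆ H.edges) :
    Even (⋃₀ A).ncard := by
  have hmaps : Set.MapsTo (H.theta 0) (⋃₀ A) (⋃₀ A) :=
    mapsTo_sUnion_of_subset_classes (Set.mem_insert _ _) (H.edges_eq_classes ▸ hA)
  exact even_ncard_of_mapsTo_involutive (hH 0).1 (fun x _ => (hH 0).2 x) hmaps (Set.toFinite _)

theorem IsHypermap.half_ncard_sUnion_add_half_ncard_sUnion_edges_sdiff (hH : H.IsHypermap)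
    (hA : A ⊆ H.edges) :
    ((⋃₀ A).ncard : ℤ) / 2 + ((⋃₀ (H.edges \ A)).ncard : ℤ) / 2 = (Nat.card F : ℤ) / 2 := by
  -- Integer division by `2` is additive here because one summand is even.
  have heven : (2 : ℤ) ∣ (⋃₀ A).ncard := by exact_mod_cast (hH.even_ncard_sUnion hA).two_dvd
  rw [sUnion_edges_sdiff hA, ← Int.add_ediv_of_dvd_left heven]
  exact_mod_cast congrArg (fun n : ℕ => (n : ℤ) / 2) (Set.ncard_add_ncard_compl (⋃₀ A))

theorem IsHypermap.subchi_add_subchi_edges_sdiff (hH : H.IsHypermap) (hA : A ⊆ H.edges) :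
    H.subchi A + H.subchi (H.edges \ A) = (H.pdual (⋃₀ A)).chi + 2 * H.v := by
  have hflags := hH.half_ncard_sUnion_add_half_ncard_sUnion_edges_sdiff hA
  have hedges : ((H.edges \ A).ncard : ℤ) + A.ncard = (H.pdual (⋃₀ A)).e := by
    rw [e_pdual, ← ncard_edges]
    exact_mod_cast Set.ncard_sdiff_add_ncard_of_subset hA
  have hfaces : H.subf (H.edges \ A) = (H.pdual (⋃₀ A)).f := by
    rw [f_pdual, subf, sUnion_edges_sdiff hA]
  have hvertices : H.subf A = (H.pdual (⋃₀ A)).v := rfl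
  unfold subchi chi
  rw [hfaces, hvertices]
  linarith

end Edges

end PreHypermap

open PreHypermap in
theorem statement_1_general {F : Type*} [Finite F] (H : PreHypermap F) (hH : H.IsHypermap)
    (A : Set (Set F)) (hA : A ⊆ H.edges) :
    (H.pdual (⋃₀ A)).eulerGenus =
      H.subeps A + H.subeps (H.edges \ A)
        + 2 * ((H.c : ℤ) - (H.subc A : ℤ) - (H.subc (H.edges \ A) : ℤ))
        + 2 * (H.v : ℤ) := by
  have hchi := hH.subchi_add_subchi_edges_sdiff hA
  unfold subeps eulerGenus
  rw [c_pdual]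
  linarith

open PreHypermap in
/-- Euler-genus formula for the partial dual:
`ε(H^A) = ε(A) + ε(A^c) + 2 (c(H) - c(A) - c(A^c)) + 2 v(H)`. -/
theorem statement_1 {F : Type} [Fintype F] (H : PreHypermap F)
    (hH : H.IsHypermap) (hconn : H.Connected)
    (A : Set (Set F)) (hA : A ⊆ H.edges) :
    (H.pdual (⋃₀ A)).eulerGenus =
      H.subeps A + H.subeps (H.edges \ A)
        + 2 * ((H.c : ℤ) - (H.subc A : ℤ) - (H.subc (H.edges \ A) : ℤ))
        + 2 * (H.v : ℤ) := by
  exact statement_1_general H hH A hA
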